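/- The cup product is graded commutative up to a coboundary on cocycles: if D ∈ C^d(A) and E ∈ C^e(A) satisfy δD = 0 and δE = 0, then D⌣E − (−1)^{de} E⌣D lies in the image of δ : C^{d+e−1}(A) → C^{d+e}(A) (an explicit primitive is given, up to sign, by the circle product D∘E). In particular the cup product induces a graded commutative product on Hochschild cohomology. -/

import Mathlib

namespace NCCalc

variable {K A : Type*}

/-- Extend a finite tuple to a sequence by zero. -/
def pad [Zero A] {n : ℕ} (a : Fin n → A) : ℕ → A :=
  fun i => if h : i < n then a ⟨i, h⟩ else 0

/-- Restrict a cochain given on sequences to a cochain of arity `n`. -/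
def res [Zero A] (n : ℕ) (F : (ℕ → A) → A) : (Fin n → A) → A :=
  fun a => F (pad a)

section AddCommGroupA
variable [AddCommGroup A]

/-- The circle (composition) product of Hochschild cochains:
`(D∘E)(a_1,…,a_{d+e−1}) = Σ_{j=0}^{d−1} (−1)^{(e+1)j} D(a_1,…,a_j, E(a_{j+1},…,a_{j+e}), …)`. -/
def circ (d e : ℕ) (D : (Fin d → A) → A) (E : (Fin e → A) → A) : (ℕ → A) → A :=
  fun a => ∑ j ∈ Finset.range d, ((-1 : ℤ) ^ ((e + 1) * j)) •
    D (fun i => if (i : ℕ) < j then a i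
        else if (i : ℕ) = j then E (fun t => a (j + (t : ℕ)))
        else a ((i : ℕ) + e - 1))

/-- The Gerstenhaber bracket `[D,E] = D∘E − (−1)^{(d+1)(e+1)} E∘D`. -/
def gbr (d e : ℕ) (D : (Fin d → A) → A) (E : (Fin e → A) → A) : (ℕ → A) → A :=
  fun a => circ d e D E a - ((-1 : ℤ) ^ ((d + 1) * (e + 1))) • circ e d E D a

end AddCommGroupA

section RingA
variable [Ring A]

/-- The cup product `(D⌣E)(a_1,…,a_{d+e}) = D(a_1,…,a_d)·E(a_{d+1},…,a_{d+e})`. -/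
def cup (d e : ℕ) (D : (Fin d → A) → A) (E : (Fin e → A) → A) : (ℕ → A) → A :=
  fun a => D (fun i => a (i : ℕ)) * E (fun i => a (d + (i : ℕ)))

/-- The Hochschild differential
`(δD)(a_1,…,a_{d+1}) = D(a_1,…,a_d)·a_{d+1} + (−1)^{d+1} a_1·D(a_2,…,a_{d+1})
  + Σ_{j=1}^{d} (−1)^{d+1+j} D(a_1,…,a_j a_{j+1},…,a_{d+1})` (indices shifted to start at 0). -/
def hdel (d : ℕ) (D : (Fin d → A) → A) : (ℕ → A) → A :=
  fun a => D (fun i => a (i : ℕ)) * a d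
    + ((-1 : ℤ) ^ (d + 1)) • (a 0 * D (fun i => a ((i : ℕ) + 1)))
    + ∑ j ∈ Finset.range d, ((-1 : ℤ) ^ (d + 1 + (j + 1))) •
        D (fun i => if (i : ℕ) < j then a i
            else if (i : ℕ) = j then a j * a (j + 1)
            else a ((i : ℕ) + 1))

end RingA

/-- Hochschild `d`-cochains: `K`-multilinear maps `A^d → A`. -/
abbrev Cochain (K A : Type*) [CommRing K] [AddCommGroup A] [Module K A] (d : ℕ) :=
  MultilinearMap K (fun _ : Fin d => A) A

section Aux

theorem sgn_congr {m n : ℕ} (h : m % 2 = n % 2) : (-1 : ℤ) ^ m = (-1 : ℤ) ^ n := by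
  rw [neg_one_pow_eq_pow_mod_two, h, ← neg_one_pow_eq_pow_mod_two]

/-- insertion of `E` at slot `j` in a sequence -/
def ins [Zero A] (e : ℕ) (E : (Fin e → A) → A) (j : ℕ) (a : ℕ → A) : ℕ → A :=
  fun i => if i < j then a i else if i = j then E (fun t => a (j + (t : ℕ))) else a (i + e - 1)

/-- merging of entries `k` and `k+1` -/
def mer [Mul A] (k : ℕ) (a : ℕ → A) : ℕ → A :=
  fun i => if i < k then a i else if i = k then a k * a (k + 1) else a (i + 1)

/-- evaluate on a sequence -/
def ev {d : ℕ} (D : (Fin d → A) → A) (x : ℕ → A) : A := D (fun i => x i)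

theorem ev_congr {d : ℕ} (D : (Fin d → A) → A) {x y : ℕ → A} (h : ∀ i < d, x i = y i) :
    ev D x = ev D y := by
  unfold ev; congr 1; funext i; exact h i i.2

theorem circ_eq [AddCommGroup A] (d e : ℕ) (D : (Fin d → A) → A) (E : (Fin e → A) → A)
    (a : ℕ → A) : circ d e D E a =
      ∑ j ∈ Finset.range d, ((-1 : ℤ) ^ ((e + 1) * j)) • ev D (ins e E j a) := rfl

theorem hdel_eq [Ring A] (d : ℕ) (D : (Fin d → A) → A) (a : ℕ → A) :
    hdel d D a = ev D a * a d + ((-1 : ℤ) ^ (d + 1)) • (a 0 * ev D (fun i => a (i + 1)))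
      + ∑ j ∈ Finset.range d, ((-1 : ℤ) ^ (d + 1 + (j + 1))) • ev D (mer j a) := rfl

theorem ins_congr [Zero A] (d e : ℕ) (E : (Fin e → A) → A) (j : ℕ) (hj : j < d) (a b : ℕ → A)
    (h : ∀ i < d + e - 1, a i = b i) : ∀ i < d, ins e E j a i = ins e E j b i := by
  intro i hi
  unfold ins
  split_ifs with h1 h2
  · exact h _ (by omega)
  · congr 1; funext t; exact h _ (by have := t.2; omega)
  · exact h _ (by omega)

theorem circ_congr [AddCommGroup A] (d e : ℕ) (D : (Fin d → A) → A) (E : (Fin e → A) → A)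
    (a b : ℕ → A) (h : ∀ i < d + e - 1, a i = b i) : circ d e D E a = circ d e D E b := by
  rw [circ_eq, circ_eq]
  refine Finset.sum_congr rfl fun j hj => ?_
  rw [ev_congr D (ins_congr d e E j (Finset.mem_range.1 hj) a b h)]

theorem pad_restrict [Zero A] (n : ℕ) (b : ℕ → A) (i : ℕ) (hi : i < n) :
    pad (fun i : Fin n => b i) i = b i := by
  simp [pad, hi]

theorem hdel_congr [Ring A] (d : ℕ) (D : (Fin d → A) → A) (a b : ℕ → A)
    (h : ∀ i < d + 1, a i = b i) : hdel d D a = hdel d D b := by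
  rw [hdel_eq, hdel_eq, ev_congr D (x := a) (y := b) (fun i hi => h i (by omega)), h d (by omega),
    h 0 (by omega), ev_congr D (x := fun i => a (i + 1)) (y := fun i => b (i + 1))
      (fun i hi => h _ (by omega))]
  congr 1
  refine Finset.sum_congr rfl fun j hj => ?_
  have hj := Finset.mem_range.1 hj
  rw [ev_congr D (x := mer j a) (y := mer j b)]
  intro i hi
  unfold mer
  rw [h i (by omega), h j (by omega), h (j+1) (by omega), h (i+1) (by omega)]

theorem hdel_zero [Ring A] (d : ℕ) (D : (Fin d → A) → A)
    (hD : ∀ a : Fin (d + 1) → A, res (d + 1) (hdel d D) a = 0) (a : ℕ → A) :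
    hdel d D a = 0 := by
  rw [← hD (fun i => a i)]
  exact hdel_congr d D _ _ fun i hi => (pad_restrict _ a i hi).symm

/-! sequence identities -/

theorem ins_mer_lt [Ring A] (e : ℕ) (E : (Fin e → A) → A) (j k : ℕ) (h : k < j) (a : ℕ → A) :
    ins e E j (mer k a) = mer k (ins e E (j + 1) a) := by
  have hE : (fun t : Fin e => mer k a (j + t)) = fun t : Fin e => a (j + 1 + t) := by
    funext t
    unfold mer
    rw [if_neg (by omega), if_neg (by omega)]
    congr 1; omega
  funext i
  unfold ins
  rw [hE]
  unfold mer
  rcases lt_trichotomy i k with h1 | h1 | h1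
  · simp [h1, show i < j by omega, show i < j + 1 by omega]
  · subst h1
    simp [h, show i < j + 1 by omega]
  · rcases lt_trichotomy i j with h2 | h2 | h2
    · simp [h2, show ¬ i < k by omega, show ¬ i = k by omega]
    · subst h2
      simp [show ¬ i < k by omega, show ¬ i = k by omega]
    · simp only [show ¬ i < k by omega, show ¬ i = k by omega, show ¬ i < j by omega,
        show ¬ i = j by omega, show ¬ i + 1 < j + 1 by omega, show ¬ i + 1 = j + 1 by omega,
        show ¬ i + e - 1 < k by omega, if_false]
      by_cases h3 : i + e - 1 = k
      · omega
      · rw [if_neg h3]; congr 1; omega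

theorem ins_mer_gt [Ring A] (e : ℕ) (E : (Fin e → A) → A) (j m : ℕ) (a : ℕ → A) :
    ins e E j (mer (j + e + m) a) = mer (j + 1 + m) (ins e E j a) := by
  have hE : (fun t : Fin e => mer (j + e + m) a (j + t)) = fun t : Fin e => a (j + t) := by
    funext t
    unfold mer
    rw [if_pos (by omega)]
  funext i
  unfold ins
  rw [hE]
  unfold mer
  rcases lt_trichotomy i j with h1 | h1 | h1
  · simp [h1, show i < j + e + m by omega, show i < j + 1 + m by omega]
  · subst h1
    simp [show i < i + 1 + m by omega]
  · rcases lt_trichotomy i (j + 1 + m) with h2 | h2 | h2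
    · simp [h2, show ¬ i < j by omega, show ¬ i = j by omega, show i + e - 1 < j + e + m by omega]
    · subst h2
      simp only [show ¬ j + 1 + m < j by omega, show ¬ j + 1 + m = j by omega,
        show ¬ j + 1 + m + 1 < j by omega, show ¬ j + 1 + m + 1 = j by omega,
        show ¬ j + 1 + m < j + 1 + m by omega,
        show j + 1 + m + e - 1 = j + e + m by omega, lt_irrefl, if_false, if_true,
        show j + 1 + m + 1 + e - 1 = j + e + m + 1 by omega]
    · simp only [show ¬ i < j by omega, show ¬ i = j by omega, show ¬ i < j + 1 + m by omega,
        show ¬ i = j + 1 + m by omega, show ¬ i + 1 < j by omega, show ¬ i + 1 = j by omega,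
        show ¬ i + e - 1 < j + e + m by omega, show ¬ i + e - 1 = j + e + m by omega, if_false]
      congr 1; omega

/-- base sequence with value `y` in slot `j` -/
def slot (e j : ℕ) (a : ℕ → A) (y : A) : ℕ → A :=
  fun i => if i < j then a i else if i = j then y else a (i + e)

theorem ins_mer_mid [Ring A] (e : ℕ) (E : (Fin e → A) → A) (j m : ℕ) (hm : m < e) (a : ℕ → A) :
    ins e E j (mer (j + m) a) = slot e j a (ev E (mer m (fun i => a (j + i)))) := by
  have hE : (fun t : Fin e => mer (j + m) a (j + t)) =
      fun t : Fin e => mer m (fun i => a (j + i)) t := by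
    funext t
    unfold mer
    simp only [add_lt_add_iff_left, add_right_inj, add_assoc]
  funext i
  unfold ins
  rw [hE]
  unfold slot ev
  rcases lt_trichotomy i j with h1 | h1 | h1
  · simp [h1, mer, show i < j + m by omega]
  · simp [h1]
  · simp only [show ¬ i < j by omega, show ¬ i = j by omega, if_false]
    unfold mer
    rw [if_neg (by omega), if_neg (by omega)]
    congr 1; omega

theorem mer_ins_self [Ring A] (e : ℕ) (E : (Fin e → A) → A) (j : ℕ) (a : ℕ → A) :
    mer j (ins e E j a) = slot e j a (ev E (fun i => a (j + i)) * a (j + e)) := by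
  funext i
  unfold mer slot ins ev
  rcases lt_trichotomy i j with h1 | h1 | h1
  · simp [h1]
  · subst h1
    simp only [lt_irrefl, if_false, if_true, show ¬ i + 1 < i by omega, show ¬ i + 1 = i by omega,
      show i + 1 + e - 1 = i + e by omega]
  · simp only [show ¬ i < j by omega, show ¬ i = j by omega, if_false,
      show ¬ i + 1 < j by omega, show ¬ i + 1 = j by omega,
      show i + 1 + e - 1 = i + e by omega]

theorem mer_ins_succ [Ring A] (e : ℕ) (E : (Fin e → A) → A) (j : ℕ) (a : ℕ → A) :
    mer j (ins e E (j + 1) a) = slot e j a (a j * ev E (fun i => a (j + (i + 1)))) := by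
  funext i
  unfold mer slot ins ev
  rcases lt_trichotomy i j with h1 | h1 | h1
  · simp [h1, show i < j + 1 by omega]
  · subst h1
    simp only [lt_irrefl, if_false, if_true, show i < i + 1 by omega]
    simp only [add_assoc, add_comm 1]
  · simp only [show ¬ i < j by omega, show ¬ i = j by omega, if_false,
      show ¬ i + 1 < j + 1 by omega, show ¬ i + 1 = j + 1 by omega,
      show i + 1 + e - 1 = i + e by omega]

end Aux

section Lin
variable [CommRing K] [Ring A] [Algebra K A]

/-- `ev D (slot ..)` as an additive map in the slot -/
def slotHom {d : ℕ} (D : Cochain K A d) (e j : ℕ) (hj : j < d) (a : ℕ → A) : A →+ A :=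
  (D.toLinearMap (fun i => a (if (i : ℕ) < j then i else i + e)) ⟨j, hj⟩).toAddMonoidHom

theorem slotHom_apply {d : ℕ} (D : Cochain K A d) (e j : ℕ) (hj : j < d) (a : ℕ → A) (y : A) :
    slotHom D e j hj a y = ev D (slot e j a y) := by
  unfold slotHom ev
  simp only [LinearMap.toAddMonoidHom_coe, MultilinearMap.toLinearMap_apply]
  congr 1
  funext i
  unfold slot Function.update
  by_cases h : (i : ℕ) = j
  · have : i = ⟨j, hj⟩ := Fin.ext h
    subst this
    simp
  · have h' : i ≠ ⟨j, hj⟩ := fun h2 => h (by rw [h2])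
    simp only [h', dif_neg, h, if_false, not_false_eq_true]
    split_ifs <;> rfl

theorem mid_sum {d e : ℕ} (D : Cochain K A d) (E : Cochain K A e)
    (hE : ∀ a : ℕ → A, hdel e E a = 0) (j : ℕ) (hj : j < d) (a : ℕ → A) :
    ∑ m ∈ Finset.range e, ((-1 : ℤ) ^ (e + m)) • ev D (ins e E j (mer (j + m) a))
      = - ev D (mer j (ins e E j a)) + ((-1 : ℤ) ^ e) • ev D (mer j (ins e E (j + 1) a)) := by
  have h := congrArg (slotHom D e j hj a) (hE (fun i => a (j + i)))
  rw [hdel_eq, map_add, map_add, map_zero, map_sum, map_zsmul, slotHom_apply, slotHom_apply] at h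
  rw [mer_ins_self, mer_ins_succ]
  simp only [map_zsmul, slotHom_apply] at h
  have e1 : ∑ m ∈ Finset.range e, ((-1 : ℤ) ^ (e + m)) • ev D (ins e E j (mer (j + m) a))
      = ∑ x ∈ Finset.range e, ((-1 : ℤ) ^ (e + 1 + (x + 1))) •
        ev D (slot e j a (ev E (mer x fun i => a (j + i)))) := by
    refine Finset.sum_congr rfl fun m hm => ?_
    rw [ins_mer_mid e E j m (Finset.mem_range.1 hm) a,
      sgn_congr (m := e + 1 + (m + 1)) (n := e + m) (by omega)]
  rw [e1, ← sub_eq_zero, ← h, pow_succ]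
  simp only [add_zero]
  module

theorem inner_sum {d e : ℕ} (D : Cochain K A d) (E : Cochain K A e)
    (hE : ∀ a : ℕ → A, hdel e E a = 0) (j : ℕ) (hj : j < d) (a : ℕ → A) :
    ∑ k ∈ Finset.range (d + e - 1), ((-1 : ℤ) ^ (d + e - 1 + 1 + (k + 1))) •
        ev D (ins e E j (mer k a))
      = ((-1 : ℤ) ^ (e + 1)) • ∑ k ∈ Finset.range (j + 1), ((-1 : ℤ) ^ (d + 1 + (k + 1))) •
          ev D (mer k (ins e E (j + 1) a))
        + ∑ m ∈ Finset.range (d - j), ((-1 : ℤ) ^ (d + 1 + (j + m + 1))) •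
          ev D (mer (j + m) (ins e E j a)) := by
  obtain ⟨r, rfl⟩ : ∃ r, d = j + r + 1 := ⟨d - j - 1, by omega⟩
  rw [show j + r + 1 + e - 1 = j + e + r by omega, show j + r + 1 - j = r + 1 by omega,
    Finset.sum_range_add, Finset.sum_range_add, Finset.sum_range_succ, Finset.sum_range_succ' (n := r)]
  have e1 : ∑ k ∈ Finset.range j, ((-1 : ℤ) ^ (j + e + r + 1 + (k + 1))) •
        ev D (ins e E j (mer k a)) = ((-1 : ℤ) ^ (e + 1)) • ∑ k ∈ Finset.range j,
        ((-1 : ℤ) ^ (j + r + 1 + 1 + (k + 1))) • ev D (mer k (ins e E (j + 1) a)) := by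
    rw [Finset.smul_sum]
    refine Finset.sum_congr rfl fun k hk => ?_
    rw [ins_mer_lt e E j k (Finset.mem_range.1 hk), smul_smul, ← pow_add]
    congr 1
    exact sgn_congr (by omega)
  have e2 : ∑ x ∈ Finset.range e, ((-1 : ℤ) ^ (j + e + r + 1 + (j + x + 1))) •
        ev D (ins e E j (mer (j + x) a)) = ((-1 : ℤ) ^ r) •
        (- ev D (mer j (ins e E j a)) + ((-1 : ℤ) ^ e) • ev D (mer j (ins e E (j + 1) a))) := by
    rw [← mid_sum D E hE j hj a, Finset.smul_sum]
    refine Finset.sum_congr rfl fun k hk => ?_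
    rw [smul_smul, ← pow_add]
    congr 1
    exact sgn_congr (by omega)
  have e3 : ∑ x ∈ Finset.range r, ((-1 : ℤ) ^ (j + e + r + 1 + (j + e + x + 1))) •
        ev D (ins e E j (mer (j + e + x) a)) = ∑ x ∈ Finset.range r,
        ((-1 : ℤ) ^ (j + r + 1 + 1 + (j + (x + 1) + 1))) •
          ev D (mer (j + (x + 1)) (ins e E j a)) := by
    refine Finset.sum_congr rfl fun k hk => ?_
    rw [ins_mer_gt, show j + 1 + k = j + (k + 1) by omega]
    congr 1
    exact sgn_congr (by omega)
  rw [e1, e2, e3, sgn_congr (m := j + r + 1 + 1 + (j + 1)) (n := r + 1) (by omega)]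
  simp only [add_zero, smul_add, smul_smul, pow_succ]
  module

theorem hdel_circ {d e : ℕ} (D : Cochain K A d) (E : Cochain K A e)
    (hD : ∀ a : ℕ → A, hdel d D a = 0) (hE : ∀ a : ℕ → A, hdel e E a = 0)
    (hde : 0 < d + e) (a : ℕ → A) :
    hdel (d + e - 1) (res (d + e - 1) (circ d e D E)) a
      = ((-1 : ℤ) ^ ((e + 1) * d + 1)) •
        (cup d e D E a - ((-1 : ℤ) ^ (d * e)) • cup e d E D a) := by
  have hev : ∀ x : ℕ → A, ev (res (d + e - 1) (circ d e D E)) x = circ d e D E x := fun x =>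
    circ_congr d e D E _ _ fun i hi => pad_restrict _ x i hi
  rw [hdel_eq]
  simp only [hev]
  let p : ℕ → A := fun j => ((-1 : ℤ) ^ ((e + 1) * j)) •
    (ev D (ins e E j a) * ins e E j a d + ∑ m ∈ Finset.range (d - j),
      ((-1 : ℤ) ^ (d + 1 + (j + m + 1))) • ev D (mer (j + m) (ins e E j a)))
  let q : ℕ → A := fun j => ((-1 : ℤ) ^ ((e + 1) * j)) •
    (((-1 : ℤ) ^ (d + 1)) • (ins e E j a 0 * ev D (fun i => ins e E j a (i + 1))) +
      ∑ k ∈ Finset.range j, ((-1 : ℤ) ^ (d + 1 + (k + 1))) • ev D (mer k (ins e E j a)))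
  have hpq : ∀ j ≤ d, p j + q j = 0 := by
    intro j hj
    have h := hD (ins e E j a)
    obtain ⟨r, rfl⟩ := Nat.exists_eq_add_of_le hj
    rw [hdel_eq, Finset.sum_range_add] at h
    simp only [p, q, ← smul_add]
    rw [Nat.add_sub_cancel_left]
    convert smul_zero _ using 2
    rw [← h]
    abel
  have hf : circ d e D E a * a (d + e - 1)
      + ((-1 : ℤ) ^ (d + e - 1 + 1)) • (a 0 * circ d e D E (fun i => a (i + 1)))
      + ∑ k ∈ Finset.range (d + e - 1), ((-1 : ℤ) ^ (d + e - 1 + 1 + (k + 1))) •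
          circ d e D E (mer k a) = ∑ j ∈ Finset.range d, (p j + q (j + 1)) := by
    simp only [circ_eq, Finset.smul_sum, Finset.sum_mul, Finset.mul_sum]
    rw [Finset.sum_comm, ← Finset.sum_add_distrib, ← Finset.sum_add_distrib]
    refine Finset.sum_congr rfl fun j hj => ?_
    have hj := Finset.mem_range.1 hj
    have h := inner_sum D E hE j hj a
    have h2 : ∑ k ∈ Finset.range (d + e - 1), ((-1 : ℤ) ^ (d + e - 1 + 1 + (k + 1))) •
        ((-1 : ℤ) ^ ((e + 1) * j)) • ev D (ins e E j (mer k a)) =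
        ((-1 : ℤ) ^ ((e + 1) * j)) • ∑ k ∈ Finset.range (d + e - 1),
          ((-1 : ℤ) ^ (d + e - 1 + 1 + (k + 1))) • ev D (ins e E j (mer k a)) := by
      rw [Finset.smul_sum]
      exact Finset.sum_congr rfl fun k _ => smul_comm _ _ _
    have h3 : ins e E j a d = a (d + e - 1) := by
      unfold ins; rw [if_neg (by omega), if_neg (by omega)]
    have h4 : ins e E (j + 1) a 0 = a 0 := by
      unfold ins; rw [if_pos (by omega)]
    have h5 : (fun i => ins e E (j + 1) a (i + 1)) = ins e E j (fun i => a (i + 1)) := by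
      funext i
      unfold ins
      simp only [add_lt_add_iff_right, add_left_inj]
      split_ifs with h1 h2
      · rfl
      · congr 1; funext t; congr 1; omega
      · congr 1; omega
    rw [h2, h]
    simp only [p, q]
    rw [h3, h4, h5, sgn_congr (m := d + e - 1 + 1) (n := d + e) (by omega),
      show (e + 1) * (j + 1) = (e + 1) * j + (e + 1) by ring, pow_add _ _ (e + 1)]
    simp only [smul_add, smul_mul_assoc, mul_smul_comm, smul_smul]
    have h6 : (-1 : ℤ) ^ (d + e) * (-1) ^ ((e + 1) * j) =
        (-1) ^ ((e + 1) * j) * (-1) ^ (e + 1) * (-1) ^ (d + 1) := by ring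
    rw [h6]
    abel
  rw [hf]
  have h1 : ∑ j ∈ Finset.range d, (p j + q (j + 1)) = - p d - q 0 := by
    have : ∑ j ∈ Finset.range d, (p j + q (j + 1)) = ∑ j ∈ Finset.range d, (q (j + 1) - q j) := by
      refine Finset.sum_congr rfl fun j hj => ?_
      rw [eq_neg_of_add_eq_zero_left (hpq j (Finset.mem_range.1 hj).le)]
      abel
    rw [this, Finset.sum_range_sub, eq_neg_of_add_eq_zero_left (hpq d le_rfl), neg_neg]
  have hp : p d = ((-1 : ℤ) ^ ((e + 1) * d)) • cup d e D E a := by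
    have a1 : ev D (ins e E d a) = D (fun i => a i) :=
      ev_congr D fun i hi => by unfold ins; rw [if_pos hi]
    have a2 : ins e E d a d = E (fun i => a (d + i)) := by
      unfold ins; simp
    simp only [p, Nat.sub_self, Finset.range_zero, Finset.sum_empty, add_zero]
    rw [a1, a2]; rfl
  have hq : q 0 = ((-1 : ℤ) ^ (d + 1)) • cup e d E D a := by
    have a1 : ev D (fun i => ins e E 0 a (i + 1)) = D (fun i => a (e + i)) :=
      ev_congr D (x := fun i => ins e E 0 a (i + 1)) (y := fun i => a (e + i)) fun i hi => by
        unfold ins; rw [if_neg (by omega), if_neg (by omega)]; congr 1; omega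
    have a2 : ins e E 0 a 0 = E (fun i => a i) := by
      unfold ins; simp
    simp only [q, Finset.range_zero, Finset.sum_empty, add_zero, mul_zero, pow_zero, one_smul]
    rw [a1, a2]; rfl
  rw [h1, hp, hq]
  have h7 : (-1 : ℤ) ^ ((e + 1) * d + 1) * (-1) ^ (d * e) = (-1) ^ (d + 1) := by
    rw [← pow_add]
    apply sgn_congr
    rw [show (e + 1) * d + 1 + d * e = d + 1 + 2 * (d * e) by ring]
    omega
  rw [smul_sub, smul_smul, h7, pow_succ]
  module

/-- one term of the circle product, as a cochain -/
def termCochain {d e : ℕ} (D : Cochain K A d) (E : Cochain K A e) (j : Fin d) :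
    Cochain K A (d + e - 1) :=
  have key : ∀ (v : Fin (d + e - 1) → A) (p : Fin (d + e - 1)),
      ∃ L : A →ₗ[K] A, ∀ x, ev D (ins e E j (pad (Function.update v p x))) = L x := by
    intro v p
    have hpad : ∀ x (i : ℕ), pad (Function.update v p x) i = if i = p then x else pad v i := by
      intro x i
      unfold pad Function.update
      by_cases h : i = p
      · subst h; simp
      · by_cases h2 : i < d + e - 1
        · simp [h2, h, Fin.ext_iff]
        · simp [h2, h]
    by_cases h1 : (p : ℕ) < j
    · refine ⟨D.toLinearMap (fun i => ins e E j (pad v) i) ⟨p, by omega⟩, fun x => ?_⟩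
      rw [MultilinearMap.toLinearMap_apply]
      unfold ev
      congr 1
      funext i
      simp only [Function.update_apply, ins, hpad, Fin.ext_iff]
      by_cases h3 : (i : ℕ) = p
      · simp [h3, h1]
      · have h4 : ∀ t : ℕ, (j : ℕ) + t ≠ p := by omega
        have h5 : (i : ℕ) > j → (i : ℕ) + e - 1 ≠ p := by omega
        simp only [h3, h4, if_false]
        split_ifs <;> first | rfl | (exfalso; omega)
    · by_cases h2 : (p : ℕ) < j + e
      · refine ⟨(D.toLinearMap (fun i => ins e E j (pad v) i) j).comp
          (E.toLinearMap (fun t => pad v (j + t)) ⟨p - j, by omega⟩), fun x => ?_⟩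
        rw [LinearMap.comp_apply, MultilinearMap.toLinearMap_apply, MultilinearMap.toLinearMap_apply]
        unfold ev
        congr 1
        funext i
        simp only [Function.update_apply, ins, hpad, Fin.ext_iff]
        rcases lt_trichotomy (i : ℕ) j with h3 | h3 | h3
        · rw [if_pos h3, if_neg (by omega), if_neg (by omega), if_pos h3]
        · rw [if_neg (by omega), if_pos h3, if_pos h3]
          congr 1
          funext t
          simp only [Function.update_apply, Fin.ext_iff]
          by_cases h4 : (j : ℕ) + t = p
          · rw [if_pos h4, if_pos (by omega)]
          · rw [if_neg h4, if_neg (by omega)]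
        · rw [if_neg (by omega), if_neg (by omega), if_neg (by omega), if_neg (by omega),
            if_neg (by omega), if_neg (by omega)]
      · refine ⟨D.toLinearMap (fun i => ins e E j (pad v) i) ⟨p + 1 - e, by omega⟩, fun x => ?_⟩
        rw [MultilinearMap.toLinearMap_apply]
        unfold ev
        congr 1
        funext i
        simp only [Function.update_apply, ins, hpad, Fin.ext_iff]
        have h4 : ∀ t : Fin e, (j : ℕ) + t ≠ p := by omega
        simp only [h4, if_false]
        rcases lt_trichotomy (i : ℕ) j with h3 | h3 | h3
        · rw [if_pos h3, if_neg (by omega), if_neg (by omega), if_pos h3]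
        · rw [if_neg (by omega), if_pos h3, if_neg (by omega), if_neg (by omega), if_pos h3]
        · rw [if_neg (by omega), if_neg (by omega), if_neg (by omega : ¬ (i : ℕ) < j),
            if_neg (by omega : ¬ (i : ℕ) = j)]
          by_cases h5 : (i : ℕ) + e - 1 = p
          · rw [if_pos h5, if_pos (by omega)]
          · rw [if_neg h5, if_neg (by omega)]
  MultilinearMap.mk' (fun v => ev D (ins e E j (pad v)))
    (fun v p x y => by
      obtain ⟨L, hL⟩ := key v p
      simp only [hL, map_add])
    (fun v p c x => by
      obtain ⟨L, hL⟩ := key v p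
      simp only [hL, map_smul])

theorem termCochain_apply {d e : ℕ} (D : Cochain K A d) (E : Cochain K A e) (j : Fin d)
    (v : Fin (d + e - 1) → A) : termCochain D E j v = ev D (ins e E j (pad v)) := rfl

theorem exists_circ {d e : ℕ} (D : Cochain K A d) (E : Cochain K A e) :
    ∃ G : Cochain K A (d + e - 1), ∀ v, G v = res (d + e - 1) (circ d e D E) v := by
  refine ⟨∑ j : Fin d, ((-1 : ℤ) ^ ((e + 1) * (j : ℕ))) • termCochain D E j, fun v => ?_⟩
  unfold res
  rw [circ_eq, Finset.sum_range, sum_apply]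
  rfl

theorem hdel_smul (n : ℕ) (F : (Fin n → A) → A) (s : ℤ) (a : ℕ → A) :
    hdel n (fun v => s • F v) a = s • hdel n F a := by
  unfold hdel
  simp only [smul_add, Finset.smul_sum, smul_mul_assoc, mul_smul_comm]
  congr 1
  · congr 1
    exact smul_comm _ _ _
  · exact Finset.sum_congr rfl fun k _ => smul_comm _ _ _

end Lin

/-- The cup product is graded commutative up to a coboundary on cocycles: if
`D ∈ C^d(A)` and `E ∈ C^e(A)` satisfy `δD = 0` and `δE = 0`, then
`D⌣E − (−1)^{de} E⌣D` lies in the image of `δ : C^{d+e−1}(A) → C^{d+e}(A)`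
(an explicit primitive is given, up to sign, by the circle product `D∘E`).
In particular the cup product induces a graded commutative product on Hochschild cohomology. -/
theorem statement7 {K A : Type*} [CommRing K] [Algebra ℚ K] [Ring A] [Algebra K A]
    (d e : ℕ) (D : Cochain K A d) (E : Cochain K A e)
    (hD : ∀ a : Fin (d + 1) → A, res (d + 1) (hdel d ⇑D) a = 0)
    (hE : ∀ a : Fin (e + 1) → A, res (e + 1) (hdel e ⇑E) a = 0) :
    ∃ G : Cochain K A (d + e - 1),
      (∃ s : ℤˣ, ∀ v : Fin (d + e - 1) → A,
        G v = (s : ℤ) • res (d + e - 1) (circ d e ⇑D ⇑E) v) ∧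
      ∀ a : Fin (d + e) → A,
        res (d + e) (cup d e ⇑D ⇑E) a - ((-1 : ℤ) ^ (d * e)) • res (d + e) (cup e d ⇑E ⇑D) a
          = res (d + e) (hdel (d + e - 1) ⇑G) a := by
  have hD' := hdel_zero d D hD
  have hE' := hdel_zero e E hE
  obtain ⟨G, hG⟩ := exists_circ D E
  have hs : ((((-1 : ℤˣ) ^ ((e + 1) * d + 1) : ℤˣ)) : ℤ) = (-1 : ℤ) ^ ((e + 1) * d + 1) := by
    push_cast; rfl
  refine ⟨((-1 : ℤ) ^ ((e + 1) * d + 1)) • G, ⟨(-1) ^ ((e + 1) * d + 1), fun v => ?_⟩, fun a => ?_⟩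
  · rw [hs, ← hG]; rfl
  · have hfun : ⇑(((-1 : ℤ) ^ ((e + 1) * d + 1)) • G) = fun v =>
        ((-1 : ℤ) ^ ((e + 1) * d + 1)) • res (d + e - 1) (circ d e D E) v := by
      funext v; rw [← hG]; rfl
    rw [hfun]
    unfold res
    rw [hdel_smul]
    rcases Nat.eq_zero_or_pos (d + e) with h0 | h0
    · obtain ⟨rfl, rfl⟩ : d = 0 ∧ e = 0 := by omega
      have h := hD' (fun _ => E (fun i => pad a i))
      simp only [hdel, Finset.range_zero, Finset.sum_empty] at h
      have e1 : ∀ x y : Fin 0 → A, D x = D y := fun x y => by rw [Subsingleton.elim x y]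
      have e2 : ∀ x y : Fin 0 → A, E x = E y := fun x y => by rw [Subsingleton.elim x y]
      have hc : cup 0 0 D E (pad a) - cup 0 0 E D (pad a) = 0 := by
        unfold cup
        rw [e1 _ (fun _ => 0), e2 _ (fun _ => 0), e2 (fun i => pad a i) (fun _ => 0),
          e1 (fun i => pad a (0 + i)) (fun _ => 0)]
        rw [e1 _ (fun _ => 0), e2 _ (fun _ => 0)] at h
        simpa [sub_eq_add_neg] using h
      simp [hc, hdel, circ]
    · have h := hdel_circ D E hD' hE' h0 (pad a)
      unfold res at h
      rw [h, smul_smul, ← pow_add, Even.neg_one_pow ⟨_, rfl⟩, one_smul]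

end NCCalc
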